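/- Under Assumption 1 (correctness of the greedy elimination algorithm), let i ∈ [m], let B ⊆ [m]∖{i} be a causal Markov blanket of X_i, and let k ∈ B. Then I(X_k → X_i ‖ X_{B∖{k}}) = 0 if and only if k ∉ A(i), and in that case B∖{k} is again a causal Markov blanket of X_i. Consequently, any causal Markov blanket B of X_i such that I(X_k → X_i ‖ X_{B∖{k}}) > 0 for every k ∈ B is equal to A(i); in particular, the procedure that starts from B = [m]∖{i} and repeatedly deletes any k ∈ B with I(X_k → X_i ‖ X_{B∖{k}}) = 0 terminates at A(i) regardless of the order of deletions. -/

import Mathlib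

open Finset

/-- Probability of an event under the probability mass function `p` on a finite space. -/
noncomputable def pr {Ω : Type} [Fintype Ω] (p : Ω → ℝ) (E : Set Ω) : ℝ :=
  ∑ ω : Ω, E.indicator p ω

/-- Shannon conditional mutual information `I(A ; B | C)` of finite-valued random variables
on a finite probability space with pmf `p` (terms with vanishing probability contribute `0`,
by the conventions `Real.log 0 = 0`, `x / 0 = 0`). -/
noncomputable def cmi {Ω α β γ : Type} [Fintype Ω] [Fintype α] [Fintype β] [Fintype γ]
    (p : Ω → ℝ) (A : Ω → α) (B : Ω → β) (C : Ω → γ) : ℝ :=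
  ∑ a : α, ∑ b : β, ∑ c : γ,
    pr p {ω | A ω = a ∧ B ω = b ∧ C ω = c} *
      Real.log (pr p {ω | A ω = a ∧ B ω = b ∧ C ω = c} * pr p {ω | C ω = c} /
        (pr p {ω | A ω = a ∧ C ω = c} * pr p {ω | B ω = b ∧ C ω = c}))

/-- `A` and `B` are conditionally independent given `C` (under the pmf `p`). -/
def CondIndep {Ω α β γ : Type} [Fintype Ω] (p : Ω → ℝ)
    (A : Ω → α) (B : Ω → β) (C : Ω → γ) : Prop :=
  ∀ (a : α) (b : β) (c : γ),
    pr p {ω | A ω = a ∧ B ω = b ∧ C ω = c} * pr p {ω | C ω = c}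
      = pr p {ω | A ω = a ∧ C ω = c} * pr p {ω | B ω = b ∧ C ω = c}

/-- Trajectories of `m` processes over `n` time steps with alphabet `𝒳`:
`ω i j` is the value of process `i` at (0-indexed) time `j`. -/
abbrev Traj (m n : ℕ) (𝒳 : Type) := Fin m → Fin n → 𝒳

/-- The past `X_S^{j-1}`: the values of the processes in `S` at times strictly before `j`;
all other entries are masked by `none`. -/
def past {m n : ℕ} {𝒳 : Type} (S : Finset (Fin m)) (j : Fin n) (ω : Traj m n 𝒳) :
    Fin m → Fin n → Option 𝒳 :=
  fun k t => if k ∈ S ∧ t < j then some (ω k t) else none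

/-- Causally conditioned directed information
`I(X_S → X_i ‖ X_T) := Σ_{j=1}^{n} I(X_S^{j-1} ; X_{i,j} | X_i^{j-1}, X_T^{j-1})`. -/
noncomputable def di {m n : ℕ} {𝒳 : Type} [Fintype 𝒳] [DecidableEq 𝒳]
    (p : Traj m n 𝒳 → ℝ) (S : Finset (Fin m)) (i : Fin m) (T : Finset (Fin m)) : ℝ :=
  ∑ j : Fin n,
    cmi p (past S j) (fun ω => ω i j) (fun ω => (past {i} j ω, past T j ω))

/-- Assumption 1: the joint distribution is strictly positive (and is a pmf), and at each
time `j` the variables `X_{1,j}, …, X_{m,j}` are mutually conditionally independent given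
the full past `X_{[m]}^{j-1}` (stated in the division-free form
`P(joint ∧ past) · P(past)^{m-1} = Π_i P(X_{i,j} = x_i ∧ past)`). -/
def Assumption1 {m n : ℕ} {𝒳 : Type} [Fintype 𝒳] [DecidableEq 𝒳]
    (p : Traj m n 𝒳 → ℝ) : Prop :=
  (∀ ω, 0 < p ω) ∧ (∑ ω : Traj m n 𝒳, p ω = 1) ∧
    ∀ (j : Fin n) (x : Fin m → 𝒳) (h : Fin m → Fin n → Option 𝒳),
      pr p {ω | (∀ i, ω i j = x i) ∧ past Finset.univ j ω = h} *
          pr p {ω | past Finset.univ j ω = h} ^ (m - 1)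
        = ∏ i : Fin m, pr p {ω | ω i j = x i ∧ past Finset.univ j ω = h}

/-- `S ⊆ [m]∖{i}` is a causal Markov blanket of `X_i` if
`I(X_{[m]∖({i}∪S)} → X_i ‖ X_S) = 0`. -/
def IsCausalBlanket {m n : ℕ} {𝒳 : Type} [Fintype 𝒳] [DecidableEq 𝒳]
    (p : Traj m n 𝒳 → ℝ) (i : Fin m) (S : Finset (Fin m)) : Prop :=
  S ⊆ Finset.univ.erase i ∧ di p (Finset.univ.erase i \ S) i S = 0

/-- A causal Markov boundary `A(i)` of `X_i` is a causal Markov blanket of minimum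
cardinality. -/
def IsCausalBoundary {m n : ℕ} {𝒳 : Type} [Fintype 𝒳] [DecidableEq 𝒳]
    (p : Traj m n 𝒳 → ℝ) (i : Fin m) (A : Finset (Fin m)) : Prop :=
  IsCausalBlanket p i A ∧
    ∀ B : Finset (Fin m), IsCausalBlanket p i B → A.card ≤ B.card

/-!
Conditional mutual information is a relative entropy, so it vanishes exactly under conditional
independence. Hence `S` is a causal Markov blanket of `X_i` if and only if, at every time, the
transition probabilities of `X_i` given the full past, seen as a function of the trajectory, depend
only on the coordinates in `S ∪ {i}`. By strict positivity this function is meaningful on the whole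
product space, where the sets of coordinates that a function depends on are stable under supersets
and intersections. So a blanket of minimum cardinality is contained in every blanket, and the
blankets are exactly the supersets of `A(i)` that avoid `i`. Finally, once `B` is a blanket,
`I(X_k → X_i ‖ X_{B∖{k}}) = 0` says precisely that `B∖{k}` is a blanket.
-/

lemma dependsOn_inter {ι β : Type*} {α : ι → Type*} {f : (∀ i, α i) → β} {s t : Set ι}
    (hs : DependsOn f s) (ht : DependsOn f t) : DependsOn f (s ∩ t) := by
  classical
  intro x y hxy
  calc f x = f (s.piecewise x y) := hs fun i hi => by simp [hi]
    _ = f y := ht fun i hi => by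
      by_cases his : i ∈ s
      · simpa [his] using hxy i ⟨his, hi⟩
      · simp [his]

section Probability

variable {Ω α β γ : Type} [Fintype Ω] {p : Ω → ℝ}

lemma pr_nonneg (hp : 0 ≤ p) (E : Set Ω) : 0 ≤ pr p E :=
  Finset.sum_nonneg fun ω _ => Set.indicator_nonneg (fun ω _ => hp ω) ω

lemma pr_mono (hp : 0 ≤ p) {E G : Set Ω} (h : E ⊆ G) : pr p E ≤ pr p G :=
  Finset.sum_le_sum fun ω _ => Set.indicator_le_indicator_of_subset h hp ω

lemma pr_eq_zero_of_subset (hp : 0 ≤ p) {E G : Set Ω} (h : E ⊆ G) (hG : pr p G = 0) :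
    pr p E = 0 :=
  le_antisymm ((pr_mono hp h).trans_eq hG) (pr_nonneg hp E)

@[simp]
lemma pr_empty : pr p ∅ = 0 := by
  simp [pr]

lemma pr_pos_of_mem (hp : ∀ ω, 0 < p ω) {E : Set Ω} {ω : Ω} (h : ω ∈ E) : 0 < pr p E :=
  Finset.sum_pos' (fun ω _ => Set.indicator_nonneg (fun ω _ => (hp ω).le) ω)
    ⟨ω, Finset.mem_univ ω, by simpa only [Set.indicator_of_mem h] using hp ω⟩

lemma sum_pr_fiber [Fintype α] (p : Ω → ℝ) (A : Ω → α) (Q : Ω → Prop) :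
    ∑ a, pr p {ω | A ω = a ∧ Q ω} = pr p {ω | Q ω} := by
  classical
  simp only [pr, Set.indicator_apply, Set.mem_ofPred_eq, ite_and]
  rw [Finset.sum_comm]
  simp

/-- The elementary conditional probability `P(E | G)`; it is `0` when `P(G) = 0`. -/
noncomputable def condPr (p : Ω → ℝ) (E G : Set Ω) : ℝ :=
  pr p (E ∩ G) / pr p G

lemma condPr_mul_pr (hp : 0 ≤ p) (E G : Set Ω) : condPr p E G * pr p G = pr p (E ∩ G) :=
  div_mul_cancel_of_imp (pr_eq_zero_of_subset hp Set.inter_subset_right)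

lemma condPr_eq_of_forall_fiber [Finite α] (hp : 0 ≤ p) {E G : Set Ω} (hG : pr p G ≠ 0)
    (F : Ω → α) {r : ℝ} (hFG : ∀ ω ∈ G, {ω' | F ω' = F ω} ⊆ G)
    (h : ∀ ω ∈ G, condPr p E {ω' | F ω' = F ω} = r) : condPr p E G = r := by
  cases nonempty_fintype α
  refine (div_eq_iff hG).2 ?_
  have fiber_eq : ∀ a, pr p {ω | F ω = a ∧ ω ∈ E ∩ G} = r * pr p {ω | F ω = a ∧ ω ∈ G} := by
    intro a
    by_cases ha : ∃ ω ∈ G, F ω = a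
    · obtain ⟨ω, hω, rfl⟩ := ha
      have hfiber : {ω' | F ω' = F ω ∧ ω' ∈ G} = {ω' | F ω' = F ω} :=
        Set.inter_eq_left.2 (hFG ω hω)
      have hfiberE : {ω' | F ω' = F ω ∧ ω' ∈ E ∩ G} = E ∩ {ω' | F ω' = F ω} := by
        rw [← hfiber]
        exact Set.inter_left_comm _ _ _
      rw [hfiber, hfiberE, ← h ω hω, condPr_mul_pr hp]
    · have hempty : {ω | F ω = a ∧ ω ∈ G} = ∅ :=
        Set.eq_empty_of_forall_notMem fun ω hω => ha ⟨ω, hω.2, hω.1⟩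
      have hemptyE : {ω | F ω = a ∧ ω ∈ E ∩ G} = ∅ :=
        Set.eq_empty_of_forall_notMem fun ω hω => ha ⟨ω, hω.2.2, hω.1⟩
      rw [hempty, hemptyE, pr_empty, mul_zero]
  calc pr p (E ∩ G) = ∑ a, pr p {ω | F ω = a ∧ ω ∈ E ∩ G} := (sum_pr_fiber p F _).symm
    _ = r * ∑ a, pr p {ω | F ω = a ∧ ω ∈ G} := by simp only [fiber_eq, Finset.mul_sum]
    _ = r * pr p G := congrArg (r * ·) (sum_pr_fiber p F _)

lemma condIndep_iff_condPr_eq (hp : ∀ ω, 0 < p ω) {A : Ω → α} {B : Ω → β} {C : Ω → γ} :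
    CondIndep p A B C ↔ ∀ ω₀ b,
      condPr p {ω | B ω = b} {ω | A ω = A ω₀ ∧ C ω = C ω₀} =
        condPr p {ω | B ω = b} {ω | C ω = C ω₀} := by
  have condPr_eq_iff : ∀ ω₀ b, condPr p {ω | B ω = b} {ω | A ω = A ω₀ ∧ C ω = C ω₀} =
      condPr p {ω | B ω = b} {ω | C ω = C ω₀} ↔
        pr p {ω | A ω = A ω₀ ∧ B ω = b ∧ C ω = C ω₀} * pr p {ω | C ω = C ω₀} =
          pr p {ω | A ω = A ω₀ ∧ C ω = C ω₀} * pr p {ω | B ω = b ∧ C ω = C ω₀} := by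
    intro ω₀ b
    have hAC : 0 < pr p {ω | A ω = A ω₀ ∧ C ω = C ω₀} := pr_pos_of_mem hp ⟨rfl, rfl⟩
    have hC : 0 < pr p {ω | C ω = C ω₀} := pr_pos_of_mem hp (ω := ω₀) rfl
    simp only [condPr, ← Set.ofPred_and]
    rw [div_eq_div_iff hAC.ne' hC.ne', mul_comm (pr p {ω | B ω = b ∧ C ω = C ω₀})]
    simp only [and_left_comm]
  simp only [condPr_eq_iff]
  refine ⟨fun h ω₀ b => h (A ω₀) b (C ω₀), fun h a b c => ?_⟩
  by_cases hac : ∃ ω₀, A ω₀ = a ∧ C ω₀ = c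
  · obtain ⟨ω₀, rfl, rfl⟩ := hac
    exact h ω₀ b
  · have hAC : {ω | A ω = a ∧ C ω = c} = ∅ :=
      Set.eq_empty_of_forall_notMem fun ω hω => hac ⟨ω, hω⟩
    have hABC : {ω | A ω = a ∧ B ω = b ∧ C ω = c} = ∅ :=
      Set.eq_empty_of_forall_notMem fun ω hω => hac ⟨ω, hω.1, hω.2.2⟩
    rw [hAC, hABC, pr_empty, zero_mul, zero_mul]

end Probability

section MutualInformation

open InformationTheory

variable {Ω α β γ : Type} [Fintype Ω] {p : Ω → ℝ}

/-- The mass function `P(A = a | C = c) P(B = b | C = c) P(C = c)` of the conditionally independent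
coupling of `A` and `B` given `C`, with value `0` when `P(C = c) = 0`. Conditional mutual
information is the relative entropy of the joint law of `(A, B, C)` with respect to it. -/
noncomputable def condProdPr (p : Ω → ℝ) (A : Ω → α) (B : Ω → β) (C : Ω → γ)
    (a : α) (b : β) (c : γ) : ℝ :=
  pr p {ω | A ω = a ∧ C ω = c} * pr p {ω | B ω = b ∧ C ω = c} / pr p {ω | C ω = c}

lemma condProdPr_nonneg (hp : 0 ≤ p) (A : Ω → α) (B : Ω → β) (C : Ω → γ) (a : α) (b : β) (c : γ) :
    0 ≤ condProdPr p A B C a b c :=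
  div_nonneg (mul_nonneg (pr_nonneg hp _) (pr_nonneg hp _)) (pr_nonneg hp _)

lemma pr_eq_zero_of_condProdPr_eq_zero (hp : 0 ≤ p) {A : Ω → α} {B : Ω → β} {C : Ω → γ}
    {a : α} {b : β} {c : γ} (h : condProdPr p A B C a b c = 0) :
    pr p {ω | A ω = a ∧ B ω = b ∧ C ω = c} = 0 := by
  rw [condProdPr, div_eq_zero_iff, mul_eq_zero] at h
  rcases h with (hAC | hBC) | hC
  · exact pr_eq_zero_of_subset hp (fun _ => And.imp_right And.right) hAC
  · exact pr_eq_zero_of_subset hp (fun _ hω => hω.2) hBC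
  · exact pr_eq_zero_of_subset hp (fun _ hω => hω.2.2) hC

lemma condIndep_iff_pr_eq_condProdPr (hp : 0 ≤ p) {A : Ω → α} {B : Ω → β} {C : Ω → γ} :
    CondIndep p A B C ↔ ∀ a b c,
      pr p {ω | A ω = a ∧ B ω = b ∧ C ω = c} = condProdPr p A B C a b c := by
  refine forall₃_congr fun a b c => ?_
  by_cases hC : pr p {ω | C ω = c} = 0
  · have hAC : pr p {ω | A ω = a ∧ C ω = c} = 0 :=
      pr_eq_zero_of_subset hp (fun _ hω => hω.2) hC
    have hABC : pr p {ω | A ω = a ∧ B ω = b ∧ C ω = c} = 0 :=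
      pr_eq_zero_of_subset hp (fun _ hω => hω.2.2) hC
    simp [condProdPr, hC, hAC, hABC]
  · exact (eq_div_iff hC).symm

lemma condProdPr_mul_klFun_nonneg (hp : 0 ≤ p) (A : Ω → α) (B : Ω → β) (C : Ω → γ)
    (a : α) (b : β) (c : γ) :
    0 ≤ condProdPr p A B C a b c *
      klFun (pr p {ω | A ω = a ∧ B ω = b ∧ C ω = c} / condProdPr p A B C a b c) :=
  mul_nonneg (condProdPr_nonneg hp ..)
    (klFun_nonneg (div_nonneg (pr_nonneg hp _) (condProdPr_nonneg hp ..)))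

lemma condProdPr_mul_klFun_eq_zero_iff (hp : 0 ≤ p) (A : Ω → α) (B : Ω → β) (C : Ω → γ)
    (a : α) (b : β) (c : γ) :
    condProdPr p A B C a b c *
        klFun (pr p {ω | A ω = a ∧ B ω = b ∧ C ω = c} / condProdPr p A B C a b c) = 0 ↔
      pr p {ω | A ω = a ∧ B ω = b ∧ C ω = c} = condProdPr p A B C a b c := by
  by_cases h : condProdPr p A B C a b c = 0
  · simp [h, pr_eq_zero_of_condProdPr_eq_zero hp h]
  · rw [mul_eq_zero_iff_left h,
      klFun_eq_zero_iff (div_nonneg (pr_nonneg hp _) (condProdPr_nonneg hp ..)),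
      div_eq_one_iff_eq h]

variable [Fintype α] [Fintype β] [Fintype γ]

lemma sum_condProdPr_eq_sum_pr (p : Ω → ℝ) (A : Ω → α) (B : Ω → β) (C : Ω → γ) :
    ∑ a, ∑ b, ∑ c, condProdPr p A B C a b c =
      ∑ a, ∑ b, ∑ c, pr p {ω | A ω = a ∧ B ω = b ∧ C ω = c} := by
  have sum_pr (c : γ) :
      ∑ a, ∑ b, pr p {ω | A ω = a ∧ B ω = b ∧ C ω = c} = pr p {ω | C ω = c} := by
    rw [Finset.sum_comm]
    simp only [sum_pr_fiber p A, sum_pr_fiber p B fun ω => C ω = c]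
  have sum_condProdPr (c : γ) : ∑ a, ∑ b, condProdPr p A B C a b c = pr p {ω | C ω = c} := by
    simp only [condProdPr, ← Finset.sum_div, ← Finset.mul_sum, ← Finset.sum_mul,
      sum_pr_fiber p A fun ω => C ω = c, sum_pr_fiber p B fun ω => C ω = c, mul_self_div_self]
  have sum_last_first (f : α → β → γ → ℝ) : ∑ a, ∑ b, ∑ c, f a b c = ∑ c, ∑ a, ∑ b, f a b c := by
    rw [Finset.sum_congr rfl fun a _ => Finset.sum_comm, Finset.sum_comm]
  simp only [sum_last_first, sum_pr, sum_condProdPr]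

lemma cmi_eq_sum_mul_klFun (hp : 0 ≤ p) (A : Ω → α) (B : Ω → β) (C : Ω → γ) :
    cmi p A B C = ∑ a, ∑ b, ∑ c, condProdPr p A B C a b c *
      klFun (pr p {ω | A ω = a ∧ B ω = b ∧ C ω = c} / condProdPr p A B C a b c) := by
  have mul_klFun_eq : ∀ a b c, condProdPr p A B C a b c *
      klFun (pr p {ω | A ω = a ∧ B ω = b ∧ C ω = c} / condProdPr p A B C a b c) =
        pr p {ω | A ω = a ∧ B ω = b ∧ C ω = c} *
          Real.log (pr p {ω | A ω = a ∧ B ω = b ∧ C ω = c} / condProdPr p A B C a b c) +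
        (condProdPr p A B C a b c - pr p {ω | A ω = a ∧ B ω = b ∧ C ω = c}) := by
    intro a b c
    by_cases h : condProdPr p A B C a b c = 0
    · simp [h, pr_eq_zero_of_condProdPr_eq_zero hp h]
    · rw [klFun_apply]
      field_simp
      ring
  simp only [mul_klFun_eq, Finset.sum_add_distrib, Finset.sum_sub_distrib,
    sum_condProdPr_eq_sum_pr, sub_self, add_zero]
  simp only [cmi, condProdPr, div_div_eq_mul_div]

lemma cmi_nonneg (hp : 0 ≤ p) (A : Ω → α) (B : Ω → β) (C : Ω → γ) : 0 ≤ cmi p A B C := by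
  rw [cmi_eq_sum_mul_klFun hp]
  exact Finset.sum_nonneg fun a _ => Finset.sum_nonneg fun b _ => Finset.sum_nonneg fun c _ =>
    condProdPr_mul_klFun_nonneg hp A B C a b c

lemma cmi_eq_zero_iff_condIndep (hp : 0 ≤ p) (A : Ω → α) (B : Ω → β) (C : Ω → γ) :
    cmi p A B C = 0 ↔ CondIndep p A B C := by
  have term_nonneg := condProdPr_mul_klFun_nonneg hp A B C
  have sum_c_nonneg := fun a b => Finset.sum_nonneg fun c (_ : c ∈ univ) => term_nonneg a b c
  have sum_bc_nonneg := fun a => Finset.sum_nonneg fun b (_ : b ∈ univ) => sum_c_nonneg a b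
  rw [cmi_eq_sum_mul_klFun hp, condIndep_iff_pr_eq_condProdPr hp]
  simp only [Finset.sum_eq_zero_iff_of_nonneg, sum_bc_nonneg, sum_c_nonneg, term_nonneg,
    Finset.mem_univ, implies_true, forall_const, condProdPr_mul_klFun_eq_zero_iff hp]

end MutualInformation

section CausalBlankets

variable {m n : ℕ} {𝒳 : Type}

lemma past_eq_past_iff {S : Finset (Fin m)} {j : Fin n} {ω ω' : Traj m n 𝒳} :
    past S j ω = past S j ω' ↔ ∀ k ∈ S, ∀ t < j, ω k t = ω' k t := by
  refine ⟨fun h k hk t ht => ?_, fun h => funext₂ fun k t => ?_⟩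
  · simpa [past, hk, ht] using congrFun₂ h k t
  · by_cases hkt : k ∈ S ∧ t < j
    · simp only [past, if_pos hkt, h k hkt.1 t hkt.2]
    · simp only [past, if_neg hkt]

lemma past_eq_past_of_subset {S T : Finset (Fin m)} (hST : S ⊆ T) {j : Fin n}
    {ω ω' : Traj m n 𝒳} (h : past T j ω = past T j ω') : past S j ω = past S j ω' :=
  past_eq_past_iff.2 fun k hk => past_eq_past_iff.1 h k (hST hk)

lemma past_union_eq_iff {S T : Finset (Fin m)} {j : Fin n} {ω ω' : Traj m n 𝒳} :
    past (S ∪ T) j ω = past (S ∪ T) j ω' ↔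
      past S j ω = past S j ω' ∧ past T j ω = past T j ω' := by
  simp only [past_eq_past_iff, Finset.mem_union, or_imp, forall_and]

lemma past_piecewise_of_past_eq {T : Finset (Fin m)} {j : Fin n} {ω ν : Traj m n 𝒳}
    (h : past T j ν = past T j ω) (S : Finset (Fin m)) :
    past S j (T.piecewise ω ν) = past S j ν := by
  refine past_eq_past_iff.2 fun k _ t ht => ?_
  by_cases hk : k ∈ T
  · simpa [hk] using (past_eq_past_iff.1 h k hk t ht).symm
  · simp [hk]

variable [Fintype 𝒳]

/-- The conditional law `x ↦ P(X_{i,j} = x | X_T^{j-1})` of the value of `X_i` at time `j` given the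
past of the processes in `T`, as a function of the trajectory `ω` that supplies this past. -/
noncomputable def transProb (p : Traj m n 𝒳 → ℝ) (i : Fin m) (j : Fin n) (T : Finset (Fin m))
    (ω : Traj m n 𝒳) (x : 𝒳) : ℝ :=
  condPr p {ω' | ω' i j = x} {ω' | past T j ω' = past T j ω}

variable {p : Traj m n 𝒳 → ℝ} {i : Fin m}

lemma transProb_congr {j : Fin n} {T : Finset (Fin m)} {ω ω' : Traj m n 𝒳}
    (h : past T j ω = past T j ω') : transProb p i j T ω = transProb p i j T ω' :=
  funext fun x => by simp only [transProb, h]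

lemma dependsOn_transProb (p : Traj m n 𝒳 → ℝ) (i : Fin m) (j : Fin n) (T : Finset (Fin m)) :
    DependsOn (transProb p i j T) T := fun _ _ h =>
  transProb_congr (past_eq_past_iff.2 fun k hk t _ => congrFun (h k hk) t)

lemma dependsOn_transProb_univ_iff (hp : ∀ ω, 0 < p ω) {j : Fin n} {T : Finset (Fin m)} :
    DependsOn (transProb p i j univ) T ↔ transProb p i j univ = transProb p i j T := by
  refine ⟨fun h => funext₂ fun ω x => Eq.symm ?_, fun h => h ▸ dependsOn_transProb p i j T⟩
  have hpos : 0 < pr p {ω' | past T j ω' = past T j ω} := pr_pos_of_mem hp (ω := ω) rfl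
  refine condPr_eq_of_forall_fiber (fun ω => (hp ω).le) hpos.ne' (past univ j)
    (fun ν hν ν' hν' => (past_eq_past_of_subset (subset_univ T) hν').trans hν) fun ν hν => ?_
  have hglue : transProb p i j univ ν = transProb p i j univ ω :=
    calc transProb p i j univ ν = transProb p i j univ (T.piecewise ω ν) :=
          (transProb_congr (past_piecewise_of_past_eq hν univ)).symm
      _ = transProb p i j univ ω := h fun k hk => T.piecewise_eq_of_mem ω ν hk
  exact congrFun hglue x

variable [DecidableEq 𝒳]

lemma di_eq_zero_iff_transProb_eq (hp : ∀ ω, 0 < p ω) {S T : Finset (Fin m)} :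
    di p S i T = 0 ↔
      ∀ j, transProb p i j (S ∪ insert i T) = transProb p i j (insert i T) := by
  have hp₀ : 0 ≤ p := fun ω => (hp ω).le
  have hT (j : Fin n) (ω ω' : Traj m n 𝒳) :
      (past {i} j ω', past T j ω') = (past {i} j ω, past T j ω) ↔
        past (insert i T) j ω' = past (insert i T) j ω := by
    rw [Finset.insert_eq, past_union_eq_iff, Prod.mk.injEq]
  rw [di, Finset.sum_eq_zero_iff_of_nonneg fun j _ => cmi_nonneg hp₀ _ _ _]
  simp only [Finset.mem_univ, true_imp_iff, cmi_eq_zero_iff_condIndep hp₀,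
    condIndep_iff_condPr_eq hp, hT, ← past_union_eq_iff]
  simp only [funext_iff (α := Traj m n 𝒳), funext_iff (α := 𝒳), transProb]

lemma isCausalBlanket_iff_dependsOn (hp : ∀ ω, 0 < p ω) {S : Finset (Fin m)} :
    IsCausalBlanket p i S ↔
      i ∉ S ∧ ∀ j, DependsOn (transProb p i j univ) (insert i S : Finset (Fin m)) := by
  have hS : univ.erase i \ S ∪ insert i S = univ := by
    ext k
    simp only [Finset.mem_union, Finset.mem_sdiff, Finset.mem_erase, Finset.mem_insert,
      Finset.mem_univ]
    tauto
  simp only [IsCausalBlanket, Finset.subset_erase, Finset.subset_univ, true_and,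
    di_eq_zero_iff_transProb_eq hp, hS, dependsOn_transProb_univ_iff hp]

lemma IsCausalBlanket.notMem {S : Finset (Fin m)} (hS : IsCausalBlanket p i S) : i ∉ S :=
  (Finset.subset_erase.1 hS.1).2

lemma IsCausalBlanket.mono (hp : ∀ ω, 0 < p ω) {S T : Finset (Fin m)}
    (hS : IsCausalBlanket p i S) (hST : S ⊆ T) (hi : i ∉ T) : IsCausalBlanket p i T := by
  rw [isCausalBlanket_iff_dependsOn hp] at hS ⊢
  exact ⟨hi, fun j => (hS.2 j).mono (Finset.coe_subset.2 (Finset.insert_subset_insert i hST))⟩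

lemma IsCausalBlanket.inter (hp : ∀ ω, 0 < p ω) {S T : Finset (Fin m)}
    (hS : IsCausalBlanket p i S) (hT : IsCausalBlanket p i T) : IsCausalBlanket p i (S ∩ T) := by
  rw [isCausalBlanket_iff_dependsOn hp] at hS hT ⊢
  refine ⟨fun h => hS.1 (Finset.mem_inter.1 h).1, fun j => ?_⟩
  rw [Finset.insert_inter_distrib, Finset.coe_inter]
  exact dependsOn_inter (hS.2 j) (hT.2 j)

lemma IsCausalBoundary.subset (hp : ∀ ω, 0 < p ω) {A B : Finset (Fin m)}
    (hA : IsCausalBoundary p i A) (hB : IsCausalBlanket p i B) : A ⊆ B :=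
  Finset.inter_eq_left.1 <|
    Finset.eq_of_subset_of_card_le Finset.inter_subset_left (hA.2 _ (hA.1.inter hp hB))

lemma IsCausalBoundary.isCausalBlanket_iff (hp : ∀ ω, 0 < p ω) {A B : Finset (Fin m)}
    (hA : IsCausalBoundary p i A) : IsCausalBlanket p i B ↔ A ⊆ B ∧ i ∉ B :=
  ⟨fun hB => ⟨hA.subset hp hB, hB.notMem⟩, fun h => hA.1.mono hp h.1 h.2⟩

lemma IsCausalBlanket.di_erase_eq_zero_iff (hp : ∀ ω, 0 < p ω) {B : Finset (Fin m)}
    (hB : IsCausalBlanket p i B) {k : Fin m} (hk : k ∈ B) :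
    di p {k} i (B.erase k) = 0 ↔ IsCausalBlanket p i (B.erase k) := by
  have hi : i ∉ B.erase k := fun h => hB.notMem (Finset.mem_of_mem_erase h)
  have hins : {k} ∪ insert i (B.erase k) = insert i B := by
    rw [← Finset.insert_eq, Finset.insert_comm, Finset.insert_erase hk]
  have hBuniv (j : Fin n) : transProb p i j univ = transProb p i j (insert i B) :=
    (dependsOn_transProb_univ_iff hp).1 (((isCausalBlanket_iff_dependsOn hp).1 hB).2 j)
  rw [isCausalBlanket_iff_dependsOn hp, and_iff_right hi, di_eq_zero_iff_transProb_eq hp, hins]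
  simp only [dependsOn_transProb_univ_iff hp, ← hBuniv]

lemma IsCausalBoundary.di_erase_eq_zero_iff (hp : ∀ ω, 0 < p ω) {A B : Finset (Fin m)}
    (hA : IsCausalBoundary p i A) (hB : IsCausalBlanket p i B) {k : Fin m} (hk : k ∈ B) :
    di p {k} i (B.erase k) = 0 ↔ k ∉ A := by
  have hi : i ∉ B.erase k := fun h => hB.notMem (Finset.mem_of_mem_erase h)
  rw [hB.di_erase_eq_zero_iff hp hk, hA.isCausalBlanket_iff hp, and_iff_left hi,
    Finset.subset_erase, and_iff_right (hA.subset hp hB)]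

lemma IsCausalBoundary.eq_of_forall_di_erase_pos (hp : ∀ ω, 0 < p ω) {A B : Finset (Fin m)}
    (hA : IsCausalBoundary p i A) (hB : IsCausalBlanket p i B)
    (hpos : ∀ k ∈ B, 0 < di p {k} i (B.erase k)) : B = A := by
  refine Finset.Subset.antisymm (fun k hk => ?_) (hA.subset hp hB)
  by_contra hkA
  exact (hpos k hk).ne' ((hA.di_erase_eq_zero_iff hp hB hk).2 hkA)

end CausalBlankets

theorem stmt_10_general {m n : ℕ} {𝒳 : Type} [Fintype 𝒳] [DecidableEq 𝒳]
    (p : Traj m n 𝒳 → ℝ) (hp : ∀ ω, 0 < p ω)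
    (i : Fin m) (A : Finset (Fin m)) (hA : IsCausalBoundary p i A)
    (B : Finset (Fin m)) (hB : IsCausalBlanket p i B) (k : Fin m) (hk : k ∈ B) :
    (di p {k} i (B.erase k) = 0 ↔ k ∉ A) ∧
      (di p {k} i (B.erase k) = 0 → IsCausalBlanket p i (B.erase k)) ∧
      (∀ B' : Finset (Fin m), IsCausalBlanket p i B' →
        (∀ k' ∈ B', 0 < di p {k'} i (B'.erase k')) → B' = A) :=
  ⟨hA.di_erase_eq_zero_iff hp hB hk, (hB.di_erase_eq_zero_iff hp hk).1,
    fun _ hB' hpos => hA.eq_of_forall_di_erase_pos hp hB' hpos⟩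

/-- correctness of the greedy elimination algorithm. Under Assumption 1,
let `B` be a causal Markov blanket of `X_i`, `k ∈ B`, and `A(i)` the causal Markov boundary.
Then `I(X_k → X_i ‖ X_{B∖{k}}) = 0` iff `k ∉ A(i)`, and in that case `B∖{k}` is again a
causal Markov blanket. Consequently any causal Markov blanket `B'` with
`I(X_k → X_i ‖ X_{B'∖{k}}) > 0` for every `k ∈ B'` equals `A(i)` (so the deletion procedure
terminates at `A(i)` regardless of the order of deletions). -/
theorem stmt_10 {m n : ℕ} (hm : 2 ≤ m) (hn : 1 ≤ n)
    {𝒳 : Type} [Fintype 𝒳] [DecidableEq 𝒳] [Nonempty 𝒳]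
    (p : Traj m n 𝒳 → ℝ) (hp : Assumption1 p)
    (i : Fin m) (A : Finset (Fin m)) (hA : IsCausalBoundary p i A)
    (B : Finset (Fin m)) (hB : IsCausalBlanket p i B) (k : Fin m) (hk : k ∈ B) :
    (di p {k} i (B.erase k) = 0 ↔ k ∉ A) ∧
      (di p {k} i (B.erase k) = 0 → IsCausalBlanket p i (B.erase k)) ∧
      (∀ B' : Finset (Fin m), IsCausalBlanket p i B' →
        (∀ k' ∈ B', 0 < di p {k'} i (B'.erase k')) → B' = A) :=
  stmt_10_general p hp.1 i A hA B hB k hk
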